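/- arXiv:2108.07531 — 4 statements merged into one kernel-verified Lean document; each statement's English description precedes it below -/
import Mathlib

section
/- Let H be a real Hilbert space and E a real normed vector space which is a linear subspace of H, with ‖v‖_H ≤ ‖v‖_E for every v ∈ E. Let B : H × E → ℝ be a bilinear form such that for every v ∈ E the map h ↦ B(h,v) is continuous on H, and assume B is coercive: there exists c > 0 such that B(v,v) ≥ c‖v‖_E² for every v ∈ E. Then for every continuous linear functional l on E there exists h ∈ H such that B(h,v) = l(v) for every v ∈ E, and moreover ‖h‖_H ≤ ‖l‖_{E'}/c, where ‖l‖_{E'} is the operator norm of l on E. -/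
/-!
By the Riesz representation theorem there is a linear map `K : E → H` with
`⟪K v, h⟫ = B h v`. Coercivity together with `‖j v‖ ≤ ‖v‖` gives `c * ‖v‖ ≤ ‖K v‖`, so `K` is
injective and `l ∘ K⁻¹` is a functional of norm at most `‖l‖ / c` on the range of `K`. A
Hahn–Banach extension of it to `H` is represented by a vector `h`, and `h` solves `B h v = l v`.
-/

open Filter

/-- **Lions' variant of the Lax–Milgram lemma.**
`H` is a real Hilbert space, `E` a real normed space continuously embedded in `H`
(via the injective linear map `j`, with `‖j v‖ ≤ ‖v‖`). `B` is a bilinear form on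
`H × E` which is continuous in the first variable and coercive on `E`. Then every
continuous linear functional `l` on `E` is represented by some `h ∈ H`, with
`‖h‖ ≤ ‖l‖ / c`. -/
theorem lions_lax_milgram
    {H : Type*} [NormedAddCommGroup H] [InnerProductSpace ℝ H] [CompleteSpace H]
    {E : Type*} [NormedAddCommGroup E] [NormedSpace ℝ E]
    (j : E →ₗ[ℝ] H) (hj : Function.Injective j)
    (hje : ∀ v : E, ‖j v‖ ≤ ‖v‖)
    (B : H →ₗ[ℝ] E →ₗ[ℝ] ℝ)
    (hBcont : ∀ v : E, Continuous fun h : H => B h v)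
    (c : ℝ) (hc : 0 < c)
    (hcoer : ∀ v : E, c * ‖v‖ ^ 2 ≤ B (j v) v)
    (l : E →L[ℝ] ℝ) :
    ∃ h : H, (∀ v : E, B h v = l v) ∧ ‖h‖ ≤ ‖l‖ / c := by
  let R := InnerProductSpace.toDual ℝ H
  let T : E → H := fun v => R.symm ⟨B.flip v, hBcont v⟩
  have hT : ∀ (v : E) (h : H), inner ℝ (T v) h = B h v := fun v h =>
    InnerProductSpace.toDual_symm_apply
  let K : E →ₗ[ℝ] H :=
    { toFun := T
      map_add' := fun v w => ext_inner_right ℝ fun h => by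
        rw [inner_add_left, hT, hT, hT, map_add]
      map_smul' := fun a v => ext_inner_right ℝ fun h => by
        rw [RingHom.id_apply, real_inner_smul_left, hT, hT, map_smul, smul_eq_mul] }
  have hK : ∀ (v : E) (h : H), inner ℝ (K v) h = B h v := hT
  have hbound : ∀ v : E, c * ‖v‖ ≤ ‖K v‖ := by
    intro v
    rcases (norm_nonneg v).eq_or_lt with h0 | hpos
    · rw [← h0, mul_zero]
      exact norm_nonneg _
    · refine le_of_mul_le_mul_right ?_ hpos
      calc c * ‖v‖ * ‖v‖ = c * ‖v‖ ^ 2 := by ring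
        _ ≤ inner ℝ (K v) (j v) := (hcoer v).trans_eq (hK v (j v)).symm
        _ ≤ ‖K v‖ * ‖j v‖ := real_inner_le_norm _ _
        _ ≤ ‖K v‖ * ‖v‖ := mul_le_mul_of_nonneg_left (hje v) (norm_nonneg _)
  have hinj : Function.Injective K := by
    rw [injective_iff_map_eq_zero]
    intro v hv
    have h := hbound v
    rw [hv, norm_zero] at h
    exact norm_le_zero_iff.mp (nonpos_of_mul_nonpos_right h hc)
  let e := LinearEquiv.ofInjective K hinj
  -- The functional `l ∘ K⁻¹` on the range of `K`.
  let f : StrongDual ℝ (LinearMap.range K) :=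
    (l.toLinearMap ∘ₗ e.symm.toLinearMap).mkContinuous (‖l‖ / c) (by
      intro x
      obtain ⟨v, rfl⟩ := e.surjective x
      have hn : ‖e v‖ = ‖K v‖ := rfl
      have hl : ‖l v‖ ≤ ‖l‖ / c * ‖K v‖ := by
        calc ‖l v‖ ≤ ‖l‖ * ‖v‖ := l.le_opNorm v
          _ = ‖l‖ / c * (c * ‖v‖) := by field_simp
          _ ≤ ‖l‖ / c * ‖K v‖ := mul_le_mul_of_nonneg_left (hbound v) (by positivity)
      simpa [hn] using hl)
  have hf : ‖f‖ ≤ ‖l‖ / c := LinearMap.mkContinuous_norm_le _ (by positivity) _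
  obtain ⟨g, hg, hgn⟩ := exists_extension_norm_eq _ f
  refine ⟨R.symm g, fun v => ?_, ?_⟩
  · have h1 : g (K v) = f (e v) := hg (e v)
    have h2 : f (e v) = l v := congrArg l (e.symm_apply_apply v)
    rw [← hK, real_inner_comm, InnerProductSpace.toDual_symm_apply, h1, h2]
  · rw [LinearIsometryEquiv.norm_map, hgn]
    exact hf
end

section
/- Let (X,d,m) be a locally doubling metric measure space and let T, S : X → X be Borel, Lusin–Lipschitz maps such that T∘S = Id holds m-a.e., S∘T = Id holds m-a.e., and such that T_*m ≤ C·m and S_*m ≤ C·m for some constant C > 0 (where T_*m denotes the pushforward measure). Then for m-a.e. x ∈ X the following holds: for every Borel set A ⊆ X, T(x) is a Lebesgue point of A if and only if x is a Lebesgue point of T⁻¹(A). -/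
/-!
Up to null sets, `T` and `S` are mutually inverse, so it suffices to transfer density one from
`T ⁻¹' A` at `x` to `A` at `y = T x`; the converse is the same statement with `T` and `S`
exchanged, applied to `T ⁻¹' A`. Almost every `x` is a density point of a set `E` on which `T` is
`K`-Lipschitz, while `y` is a density point of a set `F` on which `S` is `L`-Lipschitz and `S y = x`.
The points of `F ∩ ball y r` outside `A` are sent by `S` into `ball x (L * r)` outside `T ⁻¹' A`,
so the pushforward bound for `S` controls their measure by `o (m (ball x (L * r)))`. Conversely
`T` sends `E ∩ ball x (r / K)`, which carries at least half of the mass of `ball x (r / K)`, into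
`ball y r`; doubling at `x` and the pushforward bound for `T` therefore give
`m (ball x (L * r)) = O (m (ball y r))`. This is `lebesguePoint_of_preimage`.

The doubling constant depends on the centre, so Mathlib's density theorem for uniformly locally
doubling measures does not apply. The density theorem `ae_lebesguePoint` is instead obtained from
the measurable Vitali covering theorem on each of the countably many sets of centres where the
doubling constant is bounded.
-/

open MeasureTheory Metric Filter
open scoped ENNReal NNReal

/-- A Borel map `F : X → Y` is Lusin–Lipschitz w.r.t. the measure `m`: there are Borel sets
`(E i)` covering `m`-almost all of `X` such that `F` is Lipschitz on each `E i`. -/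
def LusinLipschitz {X Y : Type*} [MetricSpace X] [MetricSpace Y] [MeasurableSpace X]
    (m : Measure X) (F : X → Y) : Prop :=
  ∃ E : ℕ → Set X, (∀ i, MeasurableSet (E i)) ∧ m (Set.univ \ ⋃ i, E i) = 0 ∧
    ∀ i, ∃ K : ℝ≥0, LipschitzOnWith K F (E i)

/-- `z` is a Lebesgue point of the set `A`: all balls around `z` have positive measure and
`m (A ∩ B_r(z)) / m (B_r(z)) → 1` as `r ↓ 0`. -/
def LebesguePointOfSet {X : Type*} [MetricSpace X] [MeasurableSpace X]
    (m : Measure X) (A : Set X) (z : X) : Prop :=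
  (∀ r : ℝ, 0 < r → 0 < m (ball z r)) ∧
    Tendsto (fun r : ℝ => m (A ∩ ball z r) / m (ball z r))
      (nhdsWithin 0 (Set.Ioi 0)) (nhds (1 : ℝ≥0∞))

/-! ### Pointwise doubling measures -/

/-- The doubling hypothesis, with constants that may depend on the centre and on the scale. -/
def PointwiseDoubling {X : Type*} [MetricSpace X] [MeasurableSpace X] (m : Measure X) : Prop :=
  ∀ (x : X) (R : ℝ), 0 < R → ∃ C : ℝ≥0, 0 < C ∧
    ∀ r ∈ Set.Ioo (0 : ℝ) R, m (ball x (2 * r)) ≤ (C : ℝ≥0∞) * m (ball x r)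

section

variable {X : Type*} [MetricSpace X] [MeasurableSpace X] {m : Measure X}

lemma PointwiseDoubling.iterate (h : PointwiseDoubling m) (x : X) (n : ℕ) :
    ∃ D : ℝ≥0, ∀ s ∈ Set.Ioo (0 : ℝ) 1, m (ball x (2 ^ n * s)) ≤ D * m (ball x s) := by
  induction n with
  | zero => exact ⟨1, fun s _ => by simp⟩
  | succ n ih =>
    obtain ⟨D, hD⟩ := ih
    obtain ⟨C, -, hC⟩ := h x (2 ^ n) (by positivity)
    refine ⟨C * D, fun s hs => ?_⟩
    have h1 : (2 : ℝ) ^ n * s ∈ Set.Ioo (0 : ℝ) (2 ^ n) := by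
      have := hs.1
      have := hs.2
      have h2 : (0 : ℝ) < 2 ^ n := by positivity
      exact ⟨by positivity, by nlinarith⟩
    calc m (ball x (2 ^ (n + 1) * s)) = m (ball x (2 * (2 ^ n * s))) := by congr 2; ring
      _ ≤ C * m (ball x (2 ^ n * s)) := hC _ h1
      _ ≤ C * (D * m (ball x s)) := by gcongr; exact hD s hs
      _ = _ := by push_cast; ring

lemma PointwiseDoubling.ball_pos (h : PointwiseDoubling m) (hm : m ≠ 0) (x : X) {r : ℝ}
    (hr : 0 < r) : 0 < m (ball x r) := by
  by_contra h0
  have h0 : m (ball x r) = 0 := by simpa using h0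
  -- A null ball would make all its dilates null, and these exhaust the space.
  obtain ⟨s, hs, hsr⟩ : ∃ s ∈ Set.Ioo (0 : ℝ) 1, s ≤ r :=
    ⟨min r (1 / 2), ⟨by positivity, (min_le_right _ _).trans_lt (by norm_num)⟩, min_le_left _ _⟩
  have hs0 : m (ball x s) = 0 := measure_mono_null (ball_subset_ball hsr) h0
  apply hm
  rw [← Measure.measure_univ_eq_zero]
  have hU : (Set.univ : Set X) ⊆ ⋃ n : ℕ, ball x (2 ^ n * s) := by
    intro y _
    obtain ⟨n, hn⟩ := pow_unbounded_of_one_lt (dist y x / s) (one_lt_two (α := ℝ))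
    exact Set.mem_iUnion.2 ⟨n, by rwa [div_lt_iff₀ hs.1] at hn⟩
  refine measure_mono_null hU (measure_iUnion_null fun n => ?_)
  obtain ⟨D, hD⟩ := h.iterate x n
  simpa [hs0] using hD s hs

/-! ### Density points -/

/-- Density one of `A` at `z`, rephrased as `m (ball z r \ A) = o (m (ball z r))`. -/
lemma lebesguePoint_iff_small [OpensMeasurableSpace X] {A : Set X} {z : X}
    (hA : MeasurableSet A)
    (hpos : ∀ r : ℝ, 0 < r → 0 < m (ball z r)) (hfin : ∀ r : ℝ, m (ball z r) < ⊤) :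
    LebesguePointOfSet m A z ↔ ∀ ε : ℝ≥0∞, 0 < ε →
      ∀ᶠ r in nhdsWithin (0 : ℝ) (Set.Ioi 0), m (ball z r \ A) ≤ ε * m (ball z r) := by
  have hsum : ∀ r : ℝ, 0 < r →
      m (A ∩ ball z r) / m (ball z r) + m (ball z r \ A) / m (ball z r) = 1 := by
    intro r hr
    rw [← ENNReal.add_div, Set.inter_comm, measure_inter_add_sdiff _ hA]
    exact ENNReal.div_self (hpos r hr).ne' (hfin r).ne
  have hle1 : ∀ r : ℝ, 0 < r → m (A ∩ ball z r) / m (ball z r) ≤ 1 := fun r hr =>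
    (hsum r hr).le.trans' le_self_add
  have hle2 : ∀ r : ℝ, 0 < r → m (ball z r \ A) / m (ball z r) ≤ 1 := fun r hr =>
    (hsum r hr).le.trans' le_add_self
  have hmain : LebesguePointOfSet m A z ↔
      Tendsto (fun r : ℝ => m (ball z r \ A) / m (ball z r))
        (nhdsWithin 0 (Set.Ioi 0)) (nhds 0) := by
    constructor
    · rintro ⟨-, h⟩
      have h' := ENNReal.Tendsto.sub (tendsto_const_nhds (x := (1 : ℝ≥0∞))) h (Or.inl (by simp))
      rw [tsub_self] at h'
      refine h'.congr' ?_
      filter_upwards [self_mem_nhdsWithin] with r hr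
      rw [← hsum r hr, ENNReal.add_sub_cancel_left (ne_top_of_le_ne_top (by simp) (hle1 r hr))]
    · intro h
      refine ⟨hpos, ?_⟩
      have h' := ENNReal.Tendsto.sub (tendsto_const_nhds (x := (1 : ℝ≥0∞))) h (Or.inl (by simp))
      rw [tsub_zero] at h'
      refine h'.congr' ?_
      filter_upwards [self_mem_nhdsWithin] with r hr
      rw [← hsum r hr, ENNReal.add_sub_cancel_right (ne_top_of_le_ne_top (by simp) (hle2 r hr))]
  rw [hmain, ENNReal.tendsto_nhds_zero]
  refine forall₂_congr fun ε _ => eventually_congr ?_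
  filter_upwards [self_mem_nhdsWithin] with r hr
  exact ENNReal.div_le_iff (hpos r hr).ne' (hfin r).ne

/-- The bad points of `A` with a fixed density defect `ε` and a fixed doubling constant `D` are
null: the Vitali covering theorem packs them into disjoint balls inside an open set exceeding `A`
by little measure, each ball having a fixed fraction of its mass outside `A`. -/
lemma measure_defect_eq_zero [TopologicalSpace.SeparableSpace X] [BorelSpace X]
    (hfin : ∀ (x : X) (r : ℝ), m (ball x r) < ⊤) {A : Set X} (hA : MeasurableSet A)
    (x₀ : X) (R : ℝ) (D : ℝ≥0) (ε : ℝ≥0∞) (hε : 0 < ε) (hε' : ε ≠ ⊤) :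
    m {x | x ∈ A ∩ ball x₀ R ∧ (∀ s ∈ Set.Ioo (0 : ℝ) 1, m (ball x (2 ^ 2 * s)) ≤ D * m (ball x s))
      ∧ ∃ᶠ r in nhdsWithin (0 : ℝ) (Set.Ioi 0), ε * m (ball x r) < m (ball x r \ A)} = 0 := by
  set N := {x | x ∈ A ∩ ball x₀ R ∧
    (∀ s ∈ Set.Ioo (0 : ℝ) 1, m (ball x (2 ^ 2 * s)) ≤ D * m (ball x s))
      ∧ ∃ᶠ r in nhdsWithin (0 : ℝ) (Set.Ioi 0), ε * m (ball x r) < m (ball x r \ A)} with hN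
  have : SecondCountableTopology X := UniformSpace.secondCountable_of_separable X
  have : IsLocallyFiniteMeasure m :=
    ⟨fun x => ⟨ball x 1, ball_mem_nhds x one_pos, hfin x 1⟩⟩
  have hbound : ∀ η : ℝ≥0∞, η ≠ 0 → m N ≤ D / ε * η := by
    intro η hη
    obtain ⟨U, hAU, hUo, -, hU⟩ :=
      (hA.inter (measurableSet_ball (x := x₀) (ε := R))).exists_isOpen_sdiff_lt
        (ne_top_of_le_ne_top (hfin x₀ R).ne (measure_mono Set.inter_subset_right)) hη
    let t : Set (X × ℝ) := {p | p.1 ∈ N ∧ p.2 ∈ Set.Ioo (0 : ℝ) 1 ∧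
      closedBall p.1 p.2 ⊆ U ∩ ball x₀ R ∧ ε * m (ball p.1 p.2) < m (ball p.1 p.2 \ A)}
    have htriple : ∀ p ∈ t, m (closedBall p.1 (3 * p.2)) ≤ D * m (ball p.1 p.2) := by
      rintro ⟨x, r⟩ ⟨hx, hr, -, -⟩
      have hr0 : 0 < r := hr.1
      exact (measure_mono (closedBall_subset_ball (by dsimp only; linarith))).trans
        (hx.2.1 r hr)
    obtain ⟨u, hut, huc, hud, hu⟩ := Vitali.exists_disjoint_covering_ae m N t D (fun p => p.2)
      (fun p => p.1) (fun p => closedBall p.1 p.2) (fun p _ => le_rfl)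
      (fun p hp => (htriple p hp).trans (by gcongr; exact ball_subset_closedBall))
      (fun p hp => (nonempty_ball.2 hp.2.1.1).mono ball_subset_interior_closedBall)
      (fun p _ => isClosed_closedBall) (by
        intro x hx δ hδ
        have hxU : U ∩ ball x₀ R ∈ nhds x :=
          (hUo.inter isOpen_ball).mem_nhds ⟨hAU hx.1, hx.1.2⟩
        obtain ⟨ρ, hρ, hρU⟩ := Metric.nhds_basis_closedBall.mem_iff.1 hxU
        have hsmall : ∀ᶠ r in nhdsWithin (0 : ℝ) (Set.Ioi 0), r ∈ Set.Ioo 0 (min (min δ 1) ρ) :=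
          Ioo_mem_nhdsGT (by positivity)
        obtain ⟨r, hr, hr'⟩ := (hx.2.2.and_eventually hsmall).exists
        have h1 : r < min δ 1 := hr'.2.trans_le (min_le_left _ _)
        refine ⟨(x, r), ⟨hx, ⟨hr'.1, h1.trans_le (min_le_right _ _)⟩, ?_, hr⟩,
          (h1.trans_le (min_le_left _ _)).le, rfl⟩
        exact (closedBall_subset_closedBall (hr'.2.trans_le (min_le_right _ _)).le).trans hρU)
    have hball : ∀ p ∈ u, m (closedBall p.1 p.2) ≤ D / ε * m (closedBall p.1 p.2 \ A) := by
      intro p hp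
      have hp' := hut hp
      have h1 : m (ball p.1 p.2) ≤ m (closedBall p.1 p.2 \ A) / ε := by
        rw [ENNReal.le_div_iff_mul_le (Or.inl hε.ne') (Or.inl hε'), mul_comm]
        exact hp'.2.2.2.le.trans (measure_mono (Set.sdiff_subset_sdiff_left ball_subset_closedBall))
      calc m (closedBall p.1 p.2) ≤ m (closedBall p.1 (3 * p.2)) :=
            measure_mono (closedBall_subset_closedBall (by linarith [hp'.2.1.1]))
        _ ≤ D * m (ball p.1 p.2) := htriple p hp'
        _ ≤ D * (m (closedBall p.1 p.2 \ A) / ε) := by gcongr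
        _ = _ := by simp only [div_eq_mul_inv]; ring
    calc m N ≤ m (⋃ p ∈ u, closedBall p.1 p.2) := by
            exact measure_mono_ae (ae_le_set.2 hu)
      _ ≤ ∑' p : u, m (closedBall p.1.1 p.1.2) := measure_biUnion_le m huc _
      _ ≤ ∑' p : u, D / ε * m (closedBall p.1.1 p.1.2 \ A) :=
          ENNReal.tsum_le_tsum fun p => hball p.1 p.2
      _ = D / ε * m (⋃ p ∈ u, closedBall p.1 p.2 \ A) := by
          rw [ENNReal.tsum_mul_left, measure_biUnion huc
            (hud.mono_on fun p _ => Set.sdiff_subset)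
            (fun p _ => isClosed_closedBall.measurableSet.diff hA)]
      _ ≤ D / ε * η := by
          gcongr
          refine (measure_mono ?_).trans hU.le
          refine Set.iUnion₂_subset fun p hp y hy => ?_
          exact ⟨((hut hp).2.2.1 hy.1).1, fun h => hy.2 h.1⟩
  have hc : (D : ℝ≥0∞) / ε ≠ ⊤ := ENNReal.div_ne_top ENNReal.coe_ne_top hε.ne'
  have hlim : Tendsto (fun η : ℝ≥0∞ => D / ε * η) (nhdsWithin 0 (Set.Ioi 0)) (nhds 0) := by
    have := (ENNReal.continuous_const_mul hc).tendsto 0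
    rw [mul_zero] at this
    exact this.mono_left nhdsWithin_le_nhds
  refine le_antisymm (ge_of_tendsto hlim ?_) zero_le
  filter_upwards [self_mem_nhdsWithin] with η hη using hbound η (ne_of_gt hη)

/-- Lebesgue's density theorem for pointwise doubling measures. -/
lemma ae_lebesguePoint [TopologicalSpace.SeparableSpace X] [BorelSpace X]
    (hm : m ≠ 0) (hfin : ∀ (x : X) (r : ℝ), m (ball x r) < ⊤) (hd : PointwiseDoubling m)
    {A : Set X} (hA : MeasurableSet A) :
    ∀ᵐ x ∂m, x ∈ A → LebesguePointOfSet m A x := by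
  rcases isEmpty_or_nonempty X with hX | ⟨⟨x₀⟩⟩
  · exact Eventually.of_forall fun x => hX.elim x
  have hnull : ∀ᵐ x ∂m, ∀ a b c : ℕ, ¬ (x ∈ A ∩ ball x₀ a ∧
      (∀ s ∈ Set.Ioo (0 : ℝ) 1, m (ball x (2 ^ 2 * s)) ≤ (b : ℝ≥0) * m (ball x s)) ∧
      ∃ᶠ r in nhdsWithin (0 : ℝ) (Set.Ioi 0),
        ((c : ℝ≥0∞) + 1)⁻¹ * m (ball x r) < m (ball x r \ A)) := by
    simp only [ae_all_iff]
    intro a b c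
    rw [ae_iff]
    simp only [not_not]
    exact measure_defect_eq_zero hfin hA x₀ a b _ (by simp) (by simp)
  filter_upwards [hnull] with x hx hxA
  rw [lebesguePoint_iff_small hA (fun r hr => hd.ball_pos hm x hr) (hfin x)]
  intro ε hε
  obtain ⟨a, ha⟩ := exists_nat_gt (dist x x₀)
  obtain ⟨D, hD⟩ := hd.iterate x 2
  obtain ⟨b, hb⟩ := exists_nat_ge D
  obtain ⟨c, hc⟩ := ENNReal.exists_inv_nat_lt hε.ne'
  have := hx a b c
  by_contra hcon
  refine this ⟨⟨hxA, ha⟩, fun s hs => (hD s hs).trans (by gcongr), ?_⟩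
  refine (not_eventually.1 hcon).mono fun r hr => (not_le.1 hr).trans_le' ?_
  gcongr
  exact (ENNReal.inv_le_inv.2 le_self_add).trans hc.le

/-! ### Transfer of density points -/

lemma tendsto_mul_nhdsGT_zero {L : ℝ} (hL : 0 < L) :
    Tendsto (fun r : ℝ => L * r) (nhdsWithin 0 (Set.Ioi 0)) (nhdsWithin 0 (Set.Ioi 0)) := by
  refine tendsto_nhdsWithin_iff.2 ⟨?_, ?_⟩
  · have := (continuous_const_mul L).tendsto (0 : ℝ)
    rw [mul_zero] at this
    exact this.mono_left nhdsWithin_le_nhds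
  · filter_upwards [self_mem_nhdsWithin] with r hr using mul_pos hL hr

lemma measure_preimage_le_of_map_le {Y : Type*} [MeasurableSpace Y] {m : Measure Y} {T : Y → Y}
    (hT : Measurable T) {C : ℝ≥0}
    (h : m.map T ≤ (C : ℝ≥0∞) • m) {B : Set Y} (hB : MeasurableSet B) :
    m (T ⁻¹' B) ≤ C * m B := by
  have := h B
  rwa [Measure.map_apply hT hB] at this

/-- The constant `K + 1` keeps the inequality strict and the radius positive when `K = 0`. -/
lemma LipschitzOnWith.dist_lt {Y : Type*} [MetricSpace Y] {F : Y → Y} {E : Set Y} {K : ℝ≥0}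
    (h : LipschitzOnWith K F E) {x z : Y} (hx : x ∈ E) (hz : z ∈ E) {r : ℝ} (hr : dist z x < r) :
    dist (F z) (F x) < (K + 1) * r := by
  have h1 := h.dist_le_mul z hz x hx
  have h2 : (0 : ℝ) ≤ K := K.2
  nlinarith [dist_nonneg (x := z) (y := x)]

/-- Transfer of density one from `T ⁻¹' A` at `x` to `A` at `y = T x`, when `T` and `S` are
Lipschitz on sets having `x` and `y` as density points. -/
lemma lebesguePoint_of_preimage [BorelSpace X]
    (hm : m ≠ 0) (hfin : ∀ (x : X) (r : ℝ), m (ball x r) < ⊤) (hd : PointwiseDoubling m)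
    {T S : X → X} (hT : Measurable T) (hS : Measurable S) (hTS : ∀ᵐ x ∂m, T (S x) = x)
    {C : ℝ≥0} (hTpush : m.map T ≤ (C : ℝ≥0∞) • m) (hSpush : m.map S ≤ (C : ℝ≥0∞) • m)
    {x y : X} (hxy : T x = y) (hyx : S y = x)
    {E F : Set X} (hE : MeasurableSet E) (hF : MeasurableSet F) {K L : ℝ≥0}
    (hTE : LipschitzOnWith K T E) (hSF : LipschitzOnWith L S F)
    (hxE : x ∈ E) (hyF : y ∈ F) (hxE' : LebesguePointOfSet m E x)
    (hyF' : LebesguePointOfSet m F y) {A : Set X} (hA : MeasurableSet A)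
    (h : LebesguePointOfSet m (T ⁻¹' A) x) : LebesguePointOfSet m A y := by
  have hpos : ∀ (x : X) (r : ℝ), 0 < r → 0 < m (ball x r) := fun x r => hd.ball_pos hm x
  rw [lebesguePoint_iff_small hE (hpos x) (hfin x)] at hxE'
  rw [lebesguePoint_iff_small hF (hpos y) (hfin y)] at hyF'
  rw [lebesguePoint_iff_small (hT hA) (hpos x) (hfin x)] at h
  rw [lebesguePoint_iff_small hA (hpos y) (hfin y)]
  have hK : (0 : ℝ) < K + 1 := by positivity
  have hL : (0 : ℝ) < L + 1 := by positivity
  obtain ⟨n, hn⟩ := pow_unbounded_of_one_lt (((L : ℝ) + 1) * (K + 1)) (one_lt_two (α := ℝ))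
  obtain ⟨D, hD⟩ := hd.iterate x n
  -- The balls around `x` at scale `r` are dominated by the balls around `y`: the scale `r / (K + 1)`
  -- is chosen so that `T` maps the points of `E` at that scale into `ball y r`.
  have hcomp : ∀ᶠ r in nhdsWithin (0 : ℝ) (Set.Ioi 0),
      m (ball x ((L + 1) * r)) ≤ (D * (2 * C) : ℝ≥0) * m (ball y r) := by
    filter_upwards [(tendsto_mul_nhdsGT_zero (inv_pos.2 hK)).eventually (hxE' 2⁻¹ (by simp)),
      (tendsto_mul_nhdsGT_zero (inv_pos.2 hK)).eventually (Ioo_mem_nhdsGT one_pos)] with r hr hr1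
    set s := ((K : ℝ) + 1)⁻¹ * r with hs
    have hrs : r = (K + 1) * s := by rw [hs]; field_simp
    have hs0 : 0 < s := hr1.1
    have hhalf : m (ball x s) ≤ 2 * m (ball x s ∩ E) := by
      have h1 : m (ball x s) ≤ m (ball x s ∩ E) + 2⁻¹ * m (ball x s) := by
        rw [← measure_inter_add_sdiff (ball x s) hE] at hr ⊢
        gcongr
      have h2 : 2⁻¹ * m (ball x s) ≤ m (ball x s ∩ E) := by
        have h3 : 2⁻¹ * m (ball x s) ≠ ⊤ := ENNReal.mul_ne_top (by simp) (hfin x s).ne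
        refine (ENNReal.add_le_add_iff_right h3).1 (h1.trans' ?_)
        rw [← add_mul, ENNReal.inv_two_add_inv_two, one_mul]
      calc m (ball x s) = 2 * (2⁻¹ * m (ball x s)) := by
            rw [← mul_assoc, ENNReal.mul_inv_cancel (by simp) (by simp), one_mul]
        _ ≤ _ := by gcongr
    calc m (ball x ((L + 1) * r)) ≤ m (ball x (2 ^ n * s)) := by
          refine measure_mono (ball_subset_ball ?_)
          rw [hrs]; nlinarith
      _ ≤ D * m (ball x s) := hD s hr1
      _ ≤ D * (2 * m (ball x s ∩ E)) := by gcongr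
      _ ≤ D * (2 * m (T ⁻¹' ball y r)) := by
          gcongr
          rintro z ⟨hz, hzE⟩
          rw [Set.mem_preimage, mem_ball, ← hxy, hrs]
          exact hTE.dist_lt hxE hzE hz
      _ ≤ D * (2 * (C * m (ball y r))) := by
          gcongr
          exact measure_preimage_le_of_map_le hT hTpush measurableSet_ball
      _ = _ := by push_cast; ring
  intro ε hε
  set M : ℝ≥0 := C * (D * (2 * C)) with hM
  have hε2 : 0 < ε / 2 := ENNReal.div_pos hε.ne' (by simp)
  have hδ : 0 < ε / 2 / (M : ℝ≥0∞) := ENNReal.div_pos hε2.ne' (by simp)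
  filter_upwards [hcomp, hyF' _ hε2,
    (tendsto_mul_nhdsGT_zero hL).eventually (h _ hδ)] with r h1 h2 h3
  have hsub : ball y r \ A ≤ᵐ[m]
      ((ball y r \ F) ∪ S ⁻¹' (ball x ((L + 1) * r) \ T ⁻¹' A) : Set X) := by
    filter_upwards [hTS] with z hz
    rintro ⟨hzr, hzA⟩
    by_cases hzF : z ∈ F
    · refine Or.inr ⟨?_, ?_⟩
      · rw [mem_ball, ← hyx]
        exact hSF.dist_lt hyF hzF hzr
      · rwa [Set.mem_preimage, hz]
    · exact Or.inl ⟨hzr, hzF⟩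
  calc m (ball y r \ A)
      ≤ m (ball y r \ F) + m (S ⁻¹' (ball x ((L + 1) * r) \ T ⁻¹' A)) :=
        (measure_mono_ae hsub).trans (measure_union_le _ _)
    _ ≤ ε / 2 * m (ball y r) + C * (ε / 2 / M * ((D * (2 * C) : ℝ≥0) * m (ball y r))) := by
        gcongr
        refine (measure_preimage_le_of_map_le hS hSpush (measurableSet_ball.diff (hT hA))).trans ?_
        gcongr
        exact h3.trans (by gcongr)
    _ = (ε / 2 + M * (ε / 2 / M)) * m (ball y r) := by rw [hM]; push_cast; ring
    _ ≤ (ε / 2 + ε / 2) * m (ball y r) := by gcongr; exact ENNReal.mul_div_le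
    _ = ε * m (ball y r) := by rw [ENNReal.add_halves]

/-- Almost every point is a density point of one of the sets on which a Lusin–Lipschitz map is
Lipschitz. -/
lemma LusinLipschitz.ae_exists [TopologicalSpace.SeparableSpace X] [BorelSpace X]
    (hm : m ≠ 0) (hfin : ∀ (x : X) (r : ℝ), m (ball x r) < ⊤) (hd : PointwiseDoubling m)
    {T : X → X} (hT : LusinLipschitz m T) :
    ∀ᵐ x ∂m, ∃ E : Set X, MeasurableSet E ∧ x ∈ E ∧ LebesguePointOfSet m E x ∧
      ∃ K : ℝ≥0, LipschitzOnWith K T E := by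
  obtain ⟨E, hE, hcov, hlip⟩ := hT
  have hcov' : ∀ᵐ x ∂m, x ∈ ⋃ i, E i := by
    rw [ae_iff]
    exact measure_mono_null (fun x hx => (⟨trivial, hx⟩ : x ∈ Set.univ \ ⋃ i, E i)) hcov
  filter_upwards [hcov', ae_all_iff.2 fun i => ae_lebesguePoint hm hfin hd (hE i)] with x hx hx'
  obtain ⟨i, hi⟩ := Set.mem_iUnion.1 hx
  exact ⟨E i, hE i, hi, hx' i hi, hlip i⟩

/-- Whether a point is a Lebesgue point depends only on the `m`-a.e. class of the set. -/
lemma LebesguePointOfSet.congr_ae {A B : Set X} {z : X} (h : LebesguePointOfSet m A z)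
    (hAB : A =ᵐ[m] B) : LebesguePointOfSet m B z := by
  refine ⟨h.1, h.2.congr fun r => ?_⟩
  rw [measure_congr (hAB.inter (ae_eq_refl (ball z r)))]

end

/-- On a locally doubling metric measure space, if `T, S` are Borel Lusin–Lipschitz maps which
are `m`-essentially inverse to each other and both have pushforward bounded by `C·m`, then for
`m`-a.e. `x` and every Borel set `A`: `T x` is a Lebesgue point of `A` iff `x` is a Lebesgue
point of `T ⁻¹' A`. -/
theorem lebesguePoint_iff_of_lusinLipschitz_inverse
    {X : Type*} [MetricSpace X] [CompleteSpace X] [TopologicalSpace.SeparableSpace X]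
    [MeasurableSpace X] [BorelSpace X]
    (m : Measure X) (hm : m ≠ 0) (hballs : ∀ (x : X) (r : ℝ), m (ball x r) < ⊤)
    (hdoubling : ∀ (x : X) (R : ℝ), 0 < R → ∃ C : ℝ≥0, 0 < C ∧
      ∀ r ∈ Set.Ioo (0 : ℝ) R, m (ball x (2 * r)) ≤ (C : ℝ≥0∞) * m (ball x r))
    (T S : X → X) (hTmeas : Measurable T) (hSmeas : Measurable S)
    (hTL : LusinLipschitz m T) (hSL : LusinLipschitz m S)
    (hTS : ∀ᵐ x ∂m, T (S x) = x) (hST : ∀ᵐ x ∂m, S (T x) = x)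
    (C : ℝ≥0) (hC : 0 < C)
    (hTpush : m.map T ≤ (C : ℝ≥0∞) • m) (hSpush : m.map S ≤ (C : ℝ≥0∞) • m) :
    ∀ᵐ x ∂m, ∀ A : Set X, MeasurableSet A →
      (LebesguePointOfSet m A (T x) ↔ LebesguePointOfSet m (T ⁻¹' A) x) := by
  have hd : PointwiseDoubling m := hdoubling
  have hTac : Measure.QuasiMeasurePreserving T m m :=
    ⟨hTmeas, (Measure.absolutelyContinuous_of_le_smul hTpush)⟩
  filter_upwards [hTL.ae_exists hm hballs hd, hTac.ae (hSL.ae_exists hm hballs hd), hST] with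
    x ⟨E, hE, hxE, hxE', K, hK⟩ ⟨F, hF, hyF, hyF', L, hL⟩ hx A hA
  constructor
  · intro h
    -- As `T ∘ S = id` almost everywhere, `A` may be replaced by `S ⁻¹' (T ⁻¹' A)`, which puts the
    -- claim in the form of the transfer lemma with `T` and `S` exchanged.
    have hAA : A =ᵐ[m] S ⁻¹' (T ⁻¹' A) := by
      filter_upwards [hTS] with z hz
      exact propext (by change z ∈ A ↔ T (S z) ∈ A; rw [hz])
    exact lebesguePoint_of_preimage hm hballs hd hSmeas hTmeas hST hSpush hTpush hx rfl hF hE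
      hL hK hyF hxE hyF' hxE' (hTmeas hA) (h.congr_ae hAA)
  · exact lebesguePoint_of_preimage hm hballs hd hTmeas hSmeas hTS hTpush hSpush rfl hx hE hF
      hK hL hxE hyF hxE' hyF' hA
end

section
/- Let (X,d,m) be a complete separable metric space with a nonnegative Borel measure m that is finite on balls and locally uniformly doubling, i.e. for every R > 0 there exists C > 0 such that m(B_{2r}(x)) ≤ C·m(B_r(x)) for every x ∈ X and every r ∈ (0,R). Let (Y,d_Y) be a complete metric space and φ : X → Y a Borel Lusin–Lipschitz map, and let (E_i)_{i∈ℕ} be pairwise disjoint Borel sets with m(X \ ⋃_i E_i) = 0 such that φ|_{E_i} is Lipschitz for every i ∈ ℕ. Then for m-a.e. x ∈ X one has aplip φ(x) = lip(φ|_{E_i})(x), where i is the index with x ∈ E_i; equivalently, aplip φ = Σ_{i} 1_{E_i} · lip(φ|_{E_i}) holds m-a.e. -/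
/-!
Fix `i` and a point `x ∈ E i` at which `E i` has density one; by the Lebesgue density theorem for
doubling measures this is almost every `x ∈ E i` (`ae_densityPoint`).

* `apLip ≤ lipOn`: if `lipOn φ (E i) x < lam`, then near `x` the set `E i` is contained in the
  sublevel set `{g ≤ lam}` of the difference quotient `g`, which therefore has density one
  (`apLip_le_lipOn`).
* `lipOn ≤ apLip`: let `A` be a sublevel set `{g ≤ lam}` of the difference quotient with density
  one at `x`. By doubling, the ball `B(y, 2⁻ᵏ d(x, y))` occupies a definite fraction of
  `B(x, 2 d(x, y))`, so it cannot avoid `A ∩ E i` once `y` is close to `x`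
  (`eventually_exists_near`). For `y ∈ E i` this yields `z ∈ A ∩ E i` with
  `d(y, z) < 2⁻ᵏ d(x, y)`, and comparing `φ y` with `φ z` by the Lipschitz bound on `E i`, and
  `φ z` with `φ x` by `z ∈ A`, bounds the difference quotient at `y` by
  `K 2⁻ᵏ + lam (1 + 2⁻ᵏ)`. Then `k → ∞` (`lipOn_le_apLip`).
-/

open MeasureTheory Metric Filter Set
open scoped ENNReal NNReal

variable {X : Type*} [MetricSpace X] [MeasurableSpace X]

/-- `x` is a density point of the Borel set `E`: all balls around `x` have positive measure and
`m (E ∩ B_r(x)) / m (B_r(x)) → 1` as `r ↓ 0`. -/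
def DensityPoint (m : Measure X) (E : Set X) (x : X) : Prop :=
  (∀ r : ℝ, 0 < r → 0 < m (ball x r)) ∧
    Tendsto (fun r : ℝ => m (E ∩ ball x r) / m (ball x r))
      (nhdsWithin 0 (Ioi 0)) (nhds (1 : ℝ≥0∞))

/-- The approximate limsup of `g : X → [0,∞]` at `x`:
`inf {λ : x is a density point of {g ≤ λ}}`. -/
noncomputable def apLimsup (m : Measure X) (g : X → ℝ≥0∞) (x : X) : ℝ≥0∞ :=
  sInf {lam : ℝ≥0∞ | DensityPoint m {y | g y ≤ lam} x}

/-- The approximate Lipschitz constant of `F : X → Y` at `x`: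
the approximate limsup of `y ↦ d(F y, F x) / d(y, x)` at `x`. -/
noncomputable def apLip {Y : Type*} [MetricSpace Y] (m : Measure X) (F : X → Y) (x : X) :
    ℝ≥0∞ :=
  apLimsup m (fun y => edist (F y) (F x) / edist y x) x

/-- The local Lipschitz constant of the restriction `F|_E` at `x`:
`limsup_{E ∋ y → x} d(F y, F x)/d(y, x)` (which is `0` when `x` is isolated in `E`,
since then the limsup is taken along the bottom filter). -/
noncomputable def lipOn {Y : Type*} [MetricSpace Y] (F : X → Y) (E : Set X) (x : X) : ℝ≥0∞ :=
  Filter.limsup (fun y => edist (F y) (F x) / edist y x) (nhdsWithin x (E \ {x}))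

/-- A nonzero measure that is doubling at all scales charges every ball. -/
theorem ball_pos_of_doubling (m : Measure X) (hm : m ≠ 0)
    (hdoubling : ∀ R : ℝ, 0 < R → ∃ C : ℝ≥0, ∀ (x : X), ∀ r ∈ Ioo (0 : ℝ) R,
      m (ball x (2 * r)) ≤ (C : ℝ≥0∞) * m (ball x r))
    (x : X) (r : ℝ) (hr : 0 < r) : 0 < m (ball x r) := by
  by_contra h0
  have h0 : m (ball x r) = 0 := by simpa using h0
  have hn : ∀ n : ℕ, m (ball x (2 ^ n * r)) = 0 := by
    intro n
    induction n with
    | zero => simpa using h0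
    | succ n ih =>
      have hp : 0 < 2 ^ n * r := by positivity
      obtain ⟨C, hC⟩ := hdoubling (2 ^ n * r + 1) (by positivity)
      have := hC x (2 ^ n * r) ⟨hp, by linarith⟩
      rw [ih, mul_zero] at this
      rw [pow_succ', mul_assoc]
      exact le_antisymm this bot_le
  apply hm
  rw [← Measure.measure_univ_eq_zero]
  refine measure_mono_null (t := ⋃ n : ℕ, ball x (2 ^ n * r)) ?_ (measure_iUnion_null hn)
  intro y _
  obtain ⟨n, hn⟩ := pow_unbounded_of_one_lt (dist y x / r) (one_lt_two : (1 : ℝ) < 2)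
  exact mem_iUnion.2 ⟨n, by rw [mem_ball]; exact (div_lt_iff₀ hr).1 hn⟩

/-- Iterated doubling. -/
theorem ball_two_pow_le (m : Measure X) (C : ℝ≥0) {R : ℝ}
    (hC : ∀ (x : X), ∀ r ∈ Ioo (0 : ℝ) R, m (ball x (2 * r)) ≤ (C : ℝ≥0∞) * m (ball x r))
    (x : X) (n : ℕ) : ∀ r : ℝ, 0 < r → 2 ^ n * r < R →
      m (ball x (2 ^ n * r)) ≤ (C : ℝ≥0∞) ^ n * m (ball x r) := by
  induction n with
  | zero => intro r _ _; simp
  | succ n ih =>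
    intro r hr hR
    have hp : 0 < 2 ^ n * r := by positivity
    rw [pow_succ', mul_assoc] at hR ⊢
    calc m (ball x (2 * (2 ^ n * r))) ≤ C * m (ball x (2 ^ n * r)) :=
          hC x _ ⟨hp, by linarith⟩
      _ ≤ C * (C ^ n * m (ball x r)) := by gcongr; exact ih r hr (by linarith)
      _ = C ^ (n + 1) * m (ball x r) := by rw [pow_succ', mul_assoc]

/-- Lebesgue density theorem for open balls. Mathlib's version concerns closed balls; the two are
compared through the doubling inequality applied to the complement of `S`. -/
theorem ae_densityPoint [CompleteSpace X] [TopologicalSpace.SeparableSpace X] [BorelSpace X]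
    (m : Measure X) (hm : m ≠ 0) (hballs : ∀ (x : X) (r : ℝ), m (ball x r) < ⊤)
    (hdoubling : ∀ R : ℝ, 0 < R → ∃ C : ℝ≥0, ∀ (x : X), ∀ r ∈ Ioo (0 : ℝ) R,
      m (ball x (2 * r)) ≤ (C : ℝ≥0∞) * m (ball x r))
    {S : Set X} (hS : MeasurableSet S) : ∀ᵐ x ∂m, x ∈ S → DensityPoint m S x := by
  have hpos := ball_pos_of_doubling m hm hdoubling
  obtain ⟨C, hC⟩ := hdoubling 1 one_pos
  have hcb : ∀ (x : X) (r : ℝ), 0 < r → r < 1 → m (closedBall x r) ≤ C * m (ball x r) :=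
    fun x r h0 h1 => (measure_mono (closedBall_subset_ball (by linarith))).trans (hC x r ⟨h0, h1⟩)
  have : SecondCountableTopology X := UniformSpace.secondCountable_of_separable X
  have : IsLocallyFiniteMeasure m :=
    ⟨fun x => ⟨ball x 1, ball_mem_nhds x one_pos, hballs x 1⟩⟩
  have : IsUnifLocDoublingMeasure m := by
    refine ⟨C * C, ?_⟩
    filter_upwards [Ioo_mem_nhdsGT (show (0 : ℝ) < 1 / 2 by norm_num)] with r hr x
    calc m (closedBall x (2 * r)) ≤ C * m (ball x (2 * r)) :=
          hcb x _ (by linarith [hr.1]) (by linarith [hr.2])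
      _ ≤ C * (C * m (ball x r)) := by gcongr; exact hC x r ⟨hr.1, by linarith [hr.2]⟩
      _ ≤ C * (C * m (closedBall x r)) := by gcongr; exact ball_subset_closedBall
      _ = _ := by rw [ENNReal.coe_mul, mul_assoc]
  filter_upwards [(IsUnifLocDoublingMeasure.vitaliFamily m
    1).ae_tendsto_measure_inter_div_of_measurableSet hS.compl] with x hx hxS
  refine ⟨fun r hr => hpos x r hr, ?_⟩
  have hzero : Tendsto (fun r : ℝ => m (Sᶜ ∩ closedBall x r) / m (closedBall x r))
      (nhdsWithin 0 (Ioi 0)) (nhds 0) := by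
    have := hx.comp (IsUnifLocDoublingMeasure.tendsto_closedBall_filterAt (μ := m) (K := 1)
      (l := nhdsWithin (0 : ℝ) (Ioi 0)) (fun _ => x) (fun r => r) tendsto_id (by
        filter_upwards [self_mem_nhdsWithin] with r hr
        exact mem_closedBall_self (by simpa using (le_of_lt hr : (0 : ℝ) ≤ r))))
    simpa [Function.comp_def, hxS] using this
  have hzero' : Tendsto (fun r : ℝ => C * (m (Sᶜ ∩ closedBall x r) / m (closedBall x r)))
      (nhdsWithin 0 (Ioi 0)) (nhds 0) := by
    simpa using ENNReal.Tendsto.const_mul hzero (Or.inr (ENNReal.coe_ne_top (r := C)))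
  have hlow := ENNReal.Tendsto.sub (tendsto_const_nhds (x := (1 : ℝ≥0∞))) hzero'
    (Or.inl ENNReal.one_ne_top)
  rw [tsub_zero] at hlow
  refine tendsto_of_tendsto_of_tendsto_of_le_of_le' hlow tendsto_const_nhds ?_ ?_
  · filter_upwards [Ioo_mem_nhdsGT (show (0 : ℝ) < 1 by norm_num)] with r hr
    have hb0 : m (ball x r) ≠ 0 := (hpos x r hr.1).ne'
    have hbt : m (ball x r) ≠ ⊤ := (hballs x r).ne
    have hct : m (closedBall x r) ≠ ⊤ :=
      ((measure_mono (closedBall_subset_ball (lt_add_one r))).trans_lt (hballs x _)).ne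
    have hc0 : m (closedBall x r) ≠ 0 :=
      ((hpos x r hr.1).trans_le (measure_mono ball_subset_closedBall)).ne'
    rw [tsub_le_iff_right]
    have hsplit : m (ball x r) = m (S ∩ ball x r) + m (Sᶜ ∩ ball x r) := by
      rw [inter_comm, inter_comm Sᶜ, ← sdiff_eq, measure_inter_add_sdiff _ hS]
    have hcompl : m (Sᶜ ∩ ball x r) / m (ball x r) ≤
        C * (m (Sᶜ ∩ closedBall x r) / m (closedBall x r)) := by
      rw [ENNReal.div_le_iff hb0 hbt]
      calc m (Sᶜ ∩ ball x r) ≤ m (Sᶜ ∩ closedBall x r) := by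
            gcongr; exact ball_subset_closedBall
        _ = m (Sᶜ ∩ closedBall x r) / m (closedBall x r) * m (closedBall x r) :=
            (ENNReal.div_mul_cancel hc0 hct).symm
        _ ≤ m (Sᶜ ∩ closedBall x r) / m (closedBall x r) * (C * m (ball x r)) := by
            gcongr; exact hcb x r hr.1 hr.2
        _ = _ := by ring
    calc (1 : ℝ≥0∞) = m (ball x r) / m (ball x r) := (ENNReal.div_self hb0 hbt).symm
      _ = m (S ∩ ball x r) / m (ball x r) + m (Sᶜ ∩ ball x r) / m (ball x r) := by
          rw [← ENNReal.add_div, ← hsplit]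
      _ ≤ _ := by gcongr
  · exact Eventually.of_forall fun r => ENNReal.div_le_of_le_mul
      (by rw [one_mul]; exact measure_mono inter_subset_right)

/-- At a density point, the approximate Lipschitz constant only sees points of the set. -/
theorem apLip_le_lipOn {Y : Type*} [MetricSpace Y] (m : Measure X) (F : X → Y) {S : Set X}
    {x : X} (hx : DensityPoint m S x) : apLip m F x ≤ lipOn F S x := by
  refine le_of_forall_gt_imp_ge_of_dense fun lam hlam => sInf_le ⟨hx.1, ?_⟩
  have hev : ∀ᶠ y in nhdsWithin x (S \ {x}), edist (F y) (F x) / edist y x < lam :=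
    eventually_lt_of_limsup_lt hlam
  obtain ⟨ε, hε, hball⟩ := Metric.mem_nhdsWithin_iff.1 hev
  refine tendsto_of_tendsto_of_tendsto_of_le_of_le' hx.2 tendsto_const_nhds ?_ ?_
  · filter_upwards [Ioo_mem_nhdsGT hε] with r hr
    gcongr ?_ / _
    refine measure_mono fun y hy => ⟨?_, hy.2⟩
    rcases eq_or_ne y x with rfl | hne
    -- at `y = x` the quotient is `0 / 0 = 0`
    · simp
    · have h : edist (F y) (F x) / edist y x < lam :=
        hball ⟨ball_subset_ball hr.2.le hy.2, hy.1, hne⟩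
      exact h.le
  · exact Eventually.of_forall fun r => ENNReal.div_le_of_le_mul
      (by rw [one_mul]; exact measure_mono inter_subset_right)

/-- If `A` and the measurable set `S` both have density one at `x`, then `A ∩ S` meets every ball
`B(y, 2⁻ᵏ d(y, x))` with `y` close enough to `x`. -/
theorem eventually_exists_near [OpensMeasurableSpace X] (m : Measure X)
    (hballs : ∀ (x : X) (r : ℝ), m (ball x r) < ⊤)
    (hdoubling : ∀ R : ℝ, 0 < R → ∃ C : ℝ≥0, ∀ (x : X), ∀ r ∈ Ioo (0 : ℝ) R,
      m (ball x (2 * r)) ≤ (C : ℝ≥0∞) * m (ball x r))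
    {A S : Set X} (hS : MeasurableSet S) {x : X} (hxA : DensityPoint m A x)
    (hxS : DensityPoint m S x) (k : ℕ) :
    ∀ᶠ y in nhdsWithin x {x}ᶜ, ∃ z ∈ A ∩ S, dist z y < (2 ^ k)⁻¹ * dist y x := by
  obtain ⟨C, hC⟩ := hdoubling 5 (by norm_num)
  -- `c` bounds from below the fraction of `B(x, 2d)` occupied by `B(y, 2⁻ᵏ d)`, `d = d(y, x)`.
  set c : ℝ≥0∞ := ((C : ℝ≥0∞) ^ (k + 2) + 1)⁻¹ with hc
  have hD0 : (C : ℝ≥0∞) ^ (k + 2) + 1 ≠ 0 := by simp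
  have hDt : (C : ℝ≥0∞) ^ (k + 2) + 1 ≠ ⊤ := by finiteness
  have hc0 : c ≠ 0 := ENNReal.inv_ne_zero.2 hDt
  have hev : ∀ᶠ r : ℝ in nhdsWithin 0 (Ioi 0),
      1 + 1 < m (A ∩ ball x r) / m (ball x r) + m (S ∩ ball x r) / m (ball x r) + c :=
    ((hxA.2.add hxS.2).add tendsto_const_nhds).eventually
      (lt_mem_nhds (ENNReal.lt_add_right (by norm_num) hc0))
  have htend : Tendsto (fun y => 2 * dist y x) (nhdsWithin x {x}ᶜ) (nhdsWithin 0 (Ioi 0)) := by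
    refine tendsto_nhdsWithin_iff.2 ⟨?_, ?_⟩
    · have : Tendsto (fun y => 2 * dist y x) (nhds x) (nhds (2 * dist x x)) :=
        Continuous.tendsto (by fun_prop) x
      rw [dist_self, mul_zero] at this
      exact this.mono_left nhdsWithin_le_nhds
    · filter_upwards [self_mem_nhdsWithin] with y hy
      have : 0 < dist y x := dist_pos.2 hy
      exact mul_pos two_pos this
  filter_upwards [htend.eventually hev, self_mem_nhdsWithin,
    nhdsWithin_le_nhds (ball_mem_nhds x one_pos)] with y hy hyx hy1
  rw [mem_ball] at hy1
  have hd : 0 < dist y x := dist_pos.2 hyx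
  by_contra! hno
  set d := dist y x with hdd
  set B := ball x (2 * d) with hB
  set B' := ball y ((2 ^ k)⁻¹ * d) with hB'
  have hB0 : m B ≠ 0 := (hxA.1 _ (by positivity)).ne'
  have hBt : m B ≠ ⊤ := (hballs _ _).ne
  have hk1 : ((2 : ℝ) ^ k)⁻¹ ≤ 1 := inv_le_one_of_one_le₀ (one_le_pow₀ (by norm_num))
  have hsub : B' ⊆ B := by
    refine ball_subset_ball' ?_
    nlinarith
  have hdoub : m B ≤ ((C : ℝ≥0∞) ^ (k + 2) + 1) * m B' := by
    have h4 : (2 : ℝ) ^ (k + 2) * ((2 ^ k)⁻¹ * d) = 4 * d := by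
      field_simp
      ring
    have h := ball_two_pow_le m C hC y (k + 2) ((2 ^ k)⁻¹ * d) (by positivity) (by linarith)
    rw [h4] at h
    calc m B ≤ m (ball y (4 * d)) := by
          refine measure_mono (ball_subset_ball' ?_)
          rw [dist_comm]; linarith
      _ ≤ _ := h
      _ ≤ _ := by gcongr; exact le_self_add
  have hcB : c * m B ≤ m B' := by
    rw [hc, mul_comm, ← div_eq_mul_inv]
    exact ENNReal.div_le_of_le_mul' hdoub
  have hdisj : m (A ∩ S ∩ B) + m B' ≤ m B := by
    rw [← measure_union _ measurableSet_ball]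
    · exact measure_mono (union_subset inter_subset_right hsub)
    · rw [disjoint_left]
      rintro z ⟨hz, _⟩ hz'
      exact absurd (mem_ball.1 hz') (not_lt.2 (hno z hz))
  have hA : m (A ∩ B) ≤ m (A ∩ S ∩ B) + m (B \ S) := by
    refine (measure_mono ?_).trans (measure_union_le _ _)
    intro z hz
    by_cases hzS : z ∈ S
    · exact Or.inl ⟨⟨hz.1, hzS⟩, hz.2⟩
    · exact Or.inr ⟨hz.2, hzS⟩
  have hSB : m (S ∩ B) + m (B \ S) = m B := by
    rw [inter_comm, measure_inter_add_sdiff _ hS]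
  have htotal : m (A ∩ B) + m (S ∩ B) + c * m B ≤ m B + m B := calc
    _ ≤ (m (A ∩ S ∩ B) + m (B \ S)) + m (S ∩ B) + m B' := by gcongr
    _ = (m (A ∩ S ∩ B) + m B') + (m (S ∩ B) + m (B \ S)) := by ring
    _ ≤ m B + m B := by rw [hSB]; gcongr
  refine absurd htotal (not_le.2 ?_)
  have hmul := ENNReal.mul_lt_mul_left hB0 hBt hy
  simpa only [add_mul, one_mul, ENNReal.div_mul_cancel hB0 hBt] using hmul

/-- At a density point of a set on which `F` is Lipschitz, points of any density-one sublevel set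
of the difference quotient approximate all points of the set well enough to control `lipOn`. -/
theorem lipOn_le_apLip [OpensMeasurableSpace X] {Y : Type*} [MetricSpace Y] (m : Measure X)
    (hballs : ∀ (x : X) (r : ℝ), m (ball x r) < ⊤)
    (hdoubling : ∀ R : ℝ, 0 < R → ∃ C : ℝ≥0, ∀ (x : X), ∀ r ∈ Ioo (0 : ℝ) R,
      m (ball x (2 * r)) ≤ (C : ℝ≥0∞) * m (ball x r))
    (F : X → Y) {S : Set X} (hS : MeasurableSet S) {K : ℝ≥0} (hF : LipschitzOnWith K F S)
    {x : X} (hxS : DensityPoint m S x) : lipOn F S x ≤ apLip m F x := by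
  refine le_sInf fun lam hlam => ?_
  rcases eq_or_ne lam ⊤ with rfl | htop
  · exact le_top
  have hk : ∀ k : ℕ, lipOn F S x ≤ K * 2⁻¹ ^ k + lam * (1 + 2⁻¹ ^ k) := by
    intro k
    refine limsup_le_of_le (by isBoundedDefault) ?_
    filter_upwards [nhdsWithin_mono x (fun y (hy : y ∈ S \ {x}) => hy.2)
      (eventually_exists_near m hballs hdoubling hS hlam hxS k), self_mem_nhdsWithin]
      with y ⟨z, ⟨hzA, hzS⟩, hzy⟩ hy
    have he0 : edist y x ≠ 0 := (edist_pos.2 hy.2).ne'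
    have hzy' : edist y z ≤ 2⁻¹ ^ k * edist y x := by
      rw [edist_comm, edist_dist, edist_dist y x]
      refine (ENNReal.ofReal_le_ofReal hzy.le).trans_eq ?_
      rw [ENNReal.ofReal_mul (by positivity), ENNReal.ofReal_inv_of_pos (by positivity),
        ENNReal.ofReal_pow (by norm_num), ENNReal.ofReal_ofNat, ENNReal.inv_pow]
    have hzx : edist z x ≤ (1 + 2⁻¹ ^ k) * edist y x := calc
      edist z x ≤ edist z y + edist y x := edist_triangle _ _ _
      _ ≤ 2⁻¹ ^ k * edist y x + edist y x := by gcongr; rwa [edist_comm]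
      _ = _ := by ring
    have hFz : edist (F z) (F x) ≤ lam * edist z x := by
      rcases eq_or_ne z x with rfl | hne
      · simp
      · exact (ENNReal.div_le_iff (edist_pos.2 hne).ne' (edist_ne_top _ _)).1 hzA
    rw [ENNReal.div_le_iff he0 (edist_ne_top _ _)]
    calc edist (F y) (F x) ≤ edist (F y) (F z) + edist (F z) (F x) := edist_triangle _ _ _
      _ ≤ K * (2⁻¹ ^ k * edist y x) + lam * ((1 + 2⁻¹ ^ k) * edist y x) := by
          gcongr
          · exact (hF hy.1 hzS).trans (by gcongr)
          · exact hFz.trans (by gcongr)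
      _ = _ := by ring
  have hpow : Tendsto (fun k : ℕ => (2⁻¹ : ℝ≥0∞) ^ k) atTop (nhds 0) :=
    ENNReal.tendsto_pow_atTop_nhds_zero_of_lt_one (by simp)
  have hlim : Tendsto (fun k : ℕ => K * (2⁻¹ : ℝ≥0∞) ^ k + lam * (1 + 2⁻¹ ^ k)) atTop
      (nhds (K * 0 + lam * (1 + 0))) :=
    (ENNReal.Tendsto.const_mul hpow (Or.inr ENNReal.coe_ne_top)).add
      (ENNReal.Tendsto.const_mul (tendsto_const_nhds.add hpow) (Or.inr htop))
  simp only [mul_zero, add_zero, mul_one, zero_add] at hlim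
  exact ge_of_tendsto' hlim hk

/-- On a locally uniformly doubling metric measure space, if `φ : X → Y` is Borel and
Lusin–Lipschitz, with Borel partition `(E i)` of `m`-a.a. `X` on which `φ` is Lipschitz, then
for `m`-a.e. `x` one has `aplip φ x = lip (φ|_{E i}) x`, where `i` is the index with `x ∈ E i`. -/
theorem apLip_eq_lipOn_partition
    {Y : Type*} [MetricSpace Y] [CompleteSpace Y] [MeasurableSpace Y] [BorelSpace Y]
    [CompleteSpace X] [TopologicalSpace.SeparableSpace X] [BorelSpace X]
    (m : Measure X) (hm : m ≠ 0) (hballs : ∀ (x : X) (r : ℝ), m (ball x r) < ⊤)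
    (hdoubling : ∀ R : ℝ, 0 < R → ∃ C : ℝ≥0, ∀ (x : X), ∀ r ∈ Ioo (0 : ℝ) R,
      m (ball x (2 * r)) ≤ (C : ℝ≥0∞) * m (ball x r))
    (φ : X → Y) (hφ : Measurable φ)
    (E : ℕ → Set X) (hEmeas : ∀ i, MeasurableSet (E i))
    (hEdisj : Pairwise (Function.onFun Disjoint E))
    (hEfull : m (univ \ ⋃ i, E i) = 0)
    (K : ℕ → ℝ≥0) (hLip : ∀ i, LipschitzOnWith (K i) φ (E i)) :
    ∀ᵐ x ∂m, ∀ i, x ∈ E i → apLip m φ x = lipOn φ (E i) x := by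
  rw [ae_all_iff]
  intro i
  filter_upwards [ae_densityPoint m hm hballs hdoubling (hEmeas i)] with x hx hxi
  exact le_antisymm (apLip_le_lipOn m φ (hx hxi))
    (lipOn_le_apLip m hballs hdoubling φ (hEmeas i) (hLip i) (hx hxi))
end

section
/- Let H be a separable real Hilbert space and v : [0,1] → H a strongly measurable Bochner-integrable function; extend v by 0 on (1,∞). Then for every sequence τ_k ↓ 0 there exists a subsequence (not relabeled) such that for a.e. t ∈ [0,1] the Riemann sums converge to the integral: lim_{k→∞} τ_k · Σ_{i=0}^{⌊τ_k^{-1}⌋ − 1} v(τ_k(t+i)) = ∫₀¹ v(s) ds in H, where ⌊·⌋ denotes the integer part. -/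
open MeasureTheory Filter
open scoped ENNReal

/-!
The Riemann sums, as functions of the offset `t`, converge to the integral in `L¹(0,1)`; a
subsequence then converges almost everywhere.

Let `R f τ t = τ • ∑_{i < ⌊τ⁻¹⌋} f (τ (t + i))`. Averaging over `t ∈ [0,1]` tiles the interval
`[0, τ⌊τ⁻¹⌋] ⊆ [0,1]`, so `∫₀¹ R f τ = ∫ f` over that interval (`integral_riemannSum`). Applied to
`‖f‖`, this shows that `f ↦ R f τ` is a contraction from `L¹(ℝ)` to `L¹(0,1)`, uniformly in `τ`
(`integral_norm_riemannSum_le`). Hence it suffices to treat continuous compactly supported `g`,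
where uniform continuity makes `R g τ` nearly constant in `t`, thus close to its average
`∫ g` over `[0, τ⌊τ⁻¹⌋]`, and the missing piece `[τ⌊τ⁻¹⌋, 1]` has length at most `τ`
(`eventually_riemannSum_sub_le`).
-/

/-- The Riemann sum of `f` over `[0,1]` with mesh `τ` and relative offset `t` in each cell. -/
noncomputable def riemannSum {E : Type*} [NormedAddCommGroup E] [NormedSpace ℝ E]
    (f : ℝ → E) (τ t : ℝ) : E :=
  τ • ∑ i ∈ Finset.range ⌊τ⁻¹⌋₊, f (τ * (t + i))

section

variable {E : Type*} [NormedAddCommGroup E] [NormedSpace ℝ E]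

lemma mul_floor_inv_le {τ : ℝ} (hτ : 0 < τ) : τ * (⌊τ⁻¹⌋₊ : ℝ) ≤ 1 := by
  have := Nat.floor_le (inv_pos.2 hτ).le
  calc τ * (⌊τ⁻¹⌋₊ : ℝ) ≤ τ * τ⁻¹ := by gcongr
    _ = 1 := mul_inv_cancel₀ hτ.ne'

lemma one_sub_le_mul_floor_inv {τ : ℝ} (hτ : 0 < τ) : 1 - τ ≤ τ * (⌊τ⁻¹⌋₊ : ℝ) := by
  have := Nat.lt_floor_add_one τ⁻¹
  have h : τ * τ⁻¹ ≤ τ * ((⌊τ⁻¹⌋₊ : ℝ) + 1) := by gcongr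
  rw [mul_inv_cancel₀ hτ.ne'] at h
  linarith

lemma integrable_cell {F : Type*} [NormedAddCommGroup F] {f : ℝ → F} (hf : Integrable f) {τ : ℝ} (hτ : 0 < τ) (i : ℕ) :
    Integrable (fun t : ℝ => f (τ * (t + i))) :=
  (hf.comp_mul_left' hτ.ne').comp_add_right (i : ℝ)

lemma integrable_riemannSum {f : ℝ → E} (hf : Integrable f) {τ : ℝ} (hτ : 0 < τ) :
    Integrable (riemannSum f τ) :=
  (integrable_finsetSum _ fun i _ => integrable_cell hf hτ i).smul τ

/-- The average over all offsets of the Riemann sum is the integral over the tiled interval. -/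
lemma integral_riemannSum {f : ℝ → E} (hf : Integrable f) {τ : ℝ} (hτ : 0 < τ) :
    ∫ t in (0 : ℝ)..1, riemannSum f τ t = ∫ s in (0 : ℝ)..(τ * (⌊τ⁻¹⌋₊ : ℝ)), f s := by
  unfold riemannSum
  rw [intervalIntegral.integral_smul, intervalIntegral.integral_finsetSum
    (fun i _ => (integrable_cell hf hτ i).intervalIntegrable), Finset.smul_sum]
  have := intervalIntegral.sum_integral_adjacent_intervals (μ := volume) (f := f)
    (a := fun i : ℕ => τ * (i : ℝ)) (n := ⌊τ⁻¹⌋₊) (fun i _ => hf.intervalIntegrable)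
  simp only [Nat.cast_zero, mul_zero] at this
  rw [← this]
  refine Finset.sum_congr rfl fun i _ => ?_
  have h := intervalIntegral.smul_integral_comp_mul_add (a := 0) (b := 1) f τ (τ * i)
  simp only [mul_add, h]
  congr 1 <;> push_cast <;> ring

/-- The Riemann sums are contractions from `L¹(ℝ)` to `L¹(0,1)`. -/
lemma integral_norm_riemannSum_le {f : ℝ → E} (hf : Integrable f) {τ : ℝ} (hτ : 0 < τ) :
    ∫ t in (0 : ℝ)..1, ‖riemannSum f τ t‖ ≤ ∫ s, ‖f s‖ := by
  calc ∫ t in (0 : ℝ)..1, ‖riemannSum f τ t‖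
      ≤ ∫ t in (0 : ℝ)..1, riemannSum (fun s => ‖f s‖) τ t := by
        refine intervalIntegral.integral_mono_on zero_le_one
          (integrable_riemannSum hf hτ).norm.intervalIntegrable
          (integrable_riemannSum hf.norm hτ).intervalIntegrable fun t _ => ?_
        unfold riemannSum
        rw [norm_smul, Real.norm_of_nonneg hτ.le, smul_eq_mul]
        gcongr
        exact norm_sum_le _ _
    _ = ∫ s in (0 : ℝ)..(τ * (⌊τ⁻¹⌋₊ : ℝ)), ‖f s‖ := integral_riemannSum hf.norm hτ
    _ ≤ ∫ s, ‖f s‖ := by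
        rw [intervalIntegral.integral_of_le (by positivity)]
        exact setIntegral_le_integral hf.norm (Eventually.of_forall fun _ => norm_nonneg _)

/-- For continuous compactly supported functions the Riemann sums converge to the integral
uniformly in the offset. -/
lemma eventually_riemannSum_sub_le [CompleteSpace E] {g : ℝ → E} (hg : Continuous g)
    (hgs : HasCompactSupport g) {ε : ℝ} (hε : 0 < ε) :
    ∃ δ > 0, ∀ τ : ℝ, 0 < τ → τ < δ → ∀ t ∈ Set.Icc (0 : ℝ) 1,
      ‖riemannSum g τ t - ∫ s in (0 : ℝ)..1, g s‖ ≤ ε := by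
  have hgi : Integrable g := hg.integrable_of_hasCompactSupport hgs
  obtain ⟨M, hM⟩ := hgs.exists_bound_of_continuous hg
  have hM0 : 0 ≤ M := (norm_nonneg _).trans (hM 0)
  obtain ⟨η, hη, huc⟩ := Metric.uniformContinuous_iff.1
    (hgs.uniformContinuous_of_continuous hg) (ε / 2) (by positivity)
  refine ⟨min η (ε / 2 / (M + 1)), by positivity, fun τ hτ hτδ t ht => ?_⟩
  obtain ⟨hτη, hτM⟩ := lt_min_iff.1 hτδ
  have hN := mul_floor_inv_le hτ
  -- two offsets give nearly equal Riemann sums, since each node moves by at most `τ`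
  have hosc : ∀ s ∈ Set.Icc (0 : ℝ) 1,
      ‖riemannSum g τ t - riemannSum g τ s‖ ≤ ε / 2 := by
    intro s hs
    unfold riemannSum
    rw [← smul_sub, ← Finset.sum_sub_distrib, norm_smul, Real.norm_of_nonneg hτ.le]
    have hsum : ‖∑ i ∈ Finset.range ⌊τ⁻¹⌋₊, (g (τ * (t + i)) - g (τ * (s + i)))‖
        ≤ ⌊τ⁻¹⌋₊ * (ε / 2) := by
      refine (norm_sum_le_of_le (f := fun i : ℕ => g (τ * (t + i)) - g (τ * (s + i)))
        (n := fun _ => ε / 2) _ fun i _ => ?_).trans (by simp)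
      rw [← dist_eq_norm]
      refine (huc ?_).le
      have hts : |t - s| ≤ 1 := by
        rw [abs_le]; constructor <;> linarith [ht.1, ht.2, hs.1, hs.2]
      calc dist (τ * (t + i)) (τ * (s + i)) = τ * |t - s| := by
            rw [Real.dist_eq, ← mul_sub, abs_mul, abs_of_pos hτ]; congr 2; ring
        _ ≤ τ * 1 := by gcongr
        _ < η := by linarith
    calc _ ≤ τ * (⌊τ⁻¹⌋₊ * (ε / 2)) := by gcongr
      _ = (τ * ⌊τ⁻¹⌋₊) * (ε / 2) := by ring
      _ ≤ 1 * (ε / 2) := by gcongr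
      _ = ε / 2 := one_mul _
  have hRi : IntervalIntegrable (riemannSum g τ) volume 0 1 :=
    (integrable_riemannSum hgi hτ).intervalIntegrable
  have h1 : ‖riemannSum g τ t - ∫ s in (0 : ℝ)..(τ * (⌊τ⁻¹⌋₊ : ℝ)), g s‖ ≤ ε / 2 := by
    have : riemannSum g τ t - ∫ s in (0 : ℝ)..(τ * (⌊τ⁻¹⌋₊ : ℝ)), g s
        = ∫ s in (0 : ℝ)..1, (riemannSum g τ t - riemannSum g τ s) := by
      rw [intervalIntegral.integral_sub intervalIntegrable_const hRi, integral_riemannSum hgi hτ]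
      simp
    rw [this]
    refine (intervalIntegral.norm_integral_le_of_norm_le_const (C := ε / 2)
      fun s hs => hosc s ?_).trans (by simp)
    rw [Set.uIoc_of_le zero_le_one] at hs
    exact ⟨hs.1.le, hs.2⟩
  have h2 : ‖(∫ s in (0 : ℝ)..(τ * (⌊τ⁻¹⌋₊ : ℝ)), g s) - ∫ s in (0 : ℝ)..1, g s‖ ≤ ε / 2 := by
    rw [norm_sub_rev, intervalIntegral.integral_interval_sub_left
      hgi.intervalIntegrable hgi.intervalIntegrable]
    refine (intervalIntegral.norm_integral_le_of_norm_le_const (C := M) fun s _ => hM s).trans ?_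
    rw [abs_of_nonneg (by linarith)]
    have := one_sub_le_mul_floor_inv hτ
    rw [lt_div_iff₀ (by positivity)] at hτM
    calc M * (1 - τ * (⌊τ⁻¹⌋₊ : ℝ)) ≤ M * τ := by gcongr; linarith
      _ ≤ ε / 2 := by nlinarith
  calc _ ≤ _ := norm_sub_le_norm_sub_add_norm_sub _ _ _
    _ ≤ ε / 2 + ε / 2 := add_le_add h1 h2
    _ = ε := by ring

/-- Convergence of the Riemann sums to the integral in `L¹(0,1)`. -/
lemma exists_integral_riemannSum_sub_le [CompleteSpace E] {f : ℝ → E} (hf : Integrable f)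
    {ε : ℝ} (hε : 0 < ε) :
    ∃ δ > 0, ∀ τ : ℝ, 0 < τ → τ < δ →
      ∫ t in (0 : ℝ)..1, ‖riemannSum f τ t - ∫ s in (0 : ℝ)..1, f s‖ ≤ ε := by
  obtain ⟨g, hgs, hfg, hg, hgi⟩ :=
    hf.exists_hasCompactSupport_integral_sub_le (ε := ε / 3) (by positivity)
  obtain ⟨δ, hδ, H⟩ := eventually_riemannSum_sub_le hg hgs (ε := ε / 3) (by positivity)
  refine ⟨δ, hδ, fun τ hτ hτδ => ?_⟩
  have hfgi : Integrable (fun s => f s - g s) := hf.sub hgi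
  have hI : ‖(∫ s in (0 : ℝ)..1, f s) - ∫ s in (0 : ℝ)..1, g s‖ ≤ ε / 3 := by
    rw [← intervalIntegral.integral_sub hf.intervalIntegrable hgi.intervalIntegrable]
    refine (intervalIntegral.norm_integral_le_integral_norm zero_le_one).trans ?_
    rw [intervalIntegral.integral_of_le zero_le_one]
    exact (setIntegral_le_integral hfgi.norm
      (Eventually.of_forall fun _ => norm_nonneg _)).trans hfg
  have hRi := (integrable_riemannSum hfgi hτ).norm.intervalIntegrable (a := 0) (b := 1)
  calc ∫ t in (0 : ℝ)..1, ‖riemannSum f τ t - ∫ s in (0 : ℝ)..1, f s‖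
      ≤ ∫ t in (0 : ℝ)..1, (‖riemannSum (fun s => f s - g s) τ t‖ + (ε / 3 + ε / 3)) := by
        refine intervalIntegral.integral_mono_on zero_le_one
          (((integrable_riemannSum hf hτ).intervalIntegrable).sub intervalIntegrable_const).norm
          (hRi.add intervalIntegrable_const) fun t ht => ?_
        have heq : riemannSum f τ t - ∫ s in (0 : ℝ)..1, f s
            = riemannSum (fun s => f s - g s) τ t
              + ((riemannSum g τ t - ∫ s in (0 : ℝ)..1, g s)
              - ((∫ s in (0 : ℝ)..1, f s) - ∫ s in (0 : ℝ)..1, g s)) := by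
          simp only [riemannSum, Finset.sum_sub_distrib, smul_sub]
          abel
        rw [heq]
        refine (norm_add_le _ _).trans ?_
        gcongr
        exact (norm_sub_le _ _).trans (add_le_add (H τ hτ hτδ t ht) hI)
    _ = (∫ t in (0 : ℝ)..1, ‖riemannSum (fun s => f s - g s) τ t‖) + (ε / 3 + ε / 3) := by
        rw [intervalIntegral.integral_add hRi intervalIntegrable_const]
        simp
    _ ≤ ε / 3 + (ε / 3 + ε / 3) := by
        gcongr
        exact (integral_norm_riemannSum_le hfgi hτ).trans hfg
    _ = ε := by ring

/-- The nodes with offset in `[0,1]` lie in `[0,1]`, so cutting `f` off outside `[0,1]` does not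
change the Riemann sum. -/
lemma riemannSum_indicator (f : ℝ → E) {τ t : ℝ} (hτ : 0 < τ) (ht : t ∈ Set.Icc (0 : ℝ) 1) :
    riemannSum ((Set.Icc (0 : ℝ) 1).indicator f) τ t = riemannSum f τ t := by
  unfold riemannSum
  congr 1
  refine Finset.sum_congr rfl fun i hi => Set.indicator_of_mem (Set.mem_Icc.2 ⟨?_, ?_⟩) _
  · have := ht.1
    positivity
  · have hi' : (i : ℝ) + 1 ≤ (⌊τ⁻¹⌋₊ : ℝ) := by exact_mod_cast Finset.mem_range.1 hi
    calc τ * (t + i) ≤ τ * (⌊τ⁻¹⌋₊ : ℝ) := by gcongr; linarith [ht.2]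
      _ ≤ 1 := mul_floor_inv_le hτ

end

/-- **Riemann sums converge to the Bochner integral along a subsequence** (Hahn-type
theorem, Hilbert-space instance). Let `v : [0,1] → H` be strongly measurable and Bochner
integrable, extended by `0` past `1`. Then for every sequence `τ k ↓ 0` there is a
subsequence along which, for a.e. `t ∈ [0,1]`, the Riemann sums
`τ k Σ_{i<⌊τ k⁻¹⌋} v (τ k (t+i))` converge to `∫₀¹ v`. -/
theorem riemann_sums_tendsto_integral_subsequence
    {H : Type*} [NormedAddCommGroup H] [InnerProductSpace ℝ H] [CompleteSpace H]
    [TopologicalSpace.SeparableSpace H]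
    (v : ℝ → H) (hvmeas : StronglyMeasurable v)
    (hvint : IntegrableOn v (Set.Icc (0 : ℝ) 1))
    (hv0 : ∀ t : ℝ, 1 < t → v t = 0)
    (τ : ℕ → ℝ) (hτpos : ∀ k, 0 < τ k) (hτanti : Antitone τ)
    (hτ0 : Tendsto τ atTop (nhds 0)) :
    ∃ σ : ℕ → ℕ, StrictMono σ ∧
      ∀ᵐ t ∂(volume.restrict (Set.Icc (0 : ℝ) 1)),
        Tendsto
          (fun k => (τ (σ k)) • ∑ i ∈ Finset.range ⌊(τ (σ k))⁻¹⌋₊, v (τ (σ k) * (t + i)))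
          atTop (nhds (∫ s in Set.Icc (0 : ℝ) 1, v s)) := by
  set w : ℝ → H := (Set.Icc (0 : ℝ) 1).indicator v with hw
  have hwi : Integrable w := hvint.integrable_indicator measurableSet_Icc
  have hint : ∫ s in (0 : ℝ)..1, w s = ∫ s in Set.Icc (0 : ℝ) 1, v s := by
    rw [intervalIntegral.integral_of_le zero_le_one, ← integral_Icc_eq_integral_Ioc,
      hw, setIntegral_indicator measurableSet_Icc, Set.inter_self]
  set I : H := ∫ s in Set.Icc (0 : ℝ) 1, v s with hI
  have hRi : ∀ k, Integrable (riemannSum w (τ k)) (volume.restrict (Set.Icc (0 : ℝ) 1)) :=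
    fun k => (integrable_riemannSum hwi (hτpos k)).integrableOn
  have hL1 : Tendsto (fun k => ∫ t in Set.Icc (0 : ℝ) 1, ‖riemannSum w (τ k) t - I‖)
      atTop (nhds 0) := by
    refine Metric.tendsto_atTop'.2 fun ε hε => ?_
    obtain ⟨δ, hδ, Hδ⟩ := exists_integral_riemannSum_sub_le hwi (ε := ε / 2) (by positivity)
    obtain ⟨K, hK⟩ := eventually_atTop.1 (hτ0.eventually_lt_const hδ)
    refine ⟨K, fun k hk => ?_⟩
    have := Hδ (τ k) (hτpos k) (hK k hk.le)
    rw [hint, intervalIntegral.integral_of_le zero_le_one, ← integral_Icc_eq_integral_Ioc] at this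
    rw [Real.dist_eq, sub_zero, abs_of_nonneg (integral_nonneg fun _ => norm_nonneg _)]
    linarith
  have hmeas : TendstoInMeasure (volume.restrict (Set.Icc (0 : ℝ) 1))
      (fun k => riemannSum w (τ k)) atTop (fun _ => I) := by
    refine tendstoInMeasure_of_tendsto_eLpNorm one_ne_zero
      (fun k => (hRi k).aestronglyMeasurable) aestronglyMeasurable_const ?_
    have h := ENNReal.tendsto_ofReal hL1
    rw [ENNReal.ofReal_zero] at h
    refine h.congr fun k => ?_
    rw [eLpNorm_one_eq_lintegral_enorm]
    exact ofReal_integral_norm_eq_lintegral_enorm ((hRi k).sub (integrable_const I))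
  obtain ⟨σ, hσ, hae⟩ := hmeas.exists_seq_tendsto_ae
  refine ⟨σ, hσ, ?_⟩
  filter_upwards [hae, ae_restrict_mem measurableSet_Icc] with t ht htm
  exact ht.congr fun k => riemannSum_indicator v (hτpos _) htm
end
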